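/- Classification of finite-dimensional simple modules over the twisted enveloping algebra. Every non-zero finite-dimensional simple U-module is isomorphic to one of the U-modules E_n (n ≥ 0), A_n^+ or A_n^− (n ≥ 1), B_n^+ or B_n^− (n ≥ 0) defined in the context. -/

import Mathlib

/-! Matrix models for the simple modules of the twisted enveloping algebra
`U = U_F(sl₂) = ℂ⟨X,Y,Z⟩/(XZ+ZX−2X, YZ+ZY+2Y, X²−Y²−Z)`.

`Emod n` has basis `v₀,…,v_n, w₀,…,w_{n−1}`, encoded as `Fin (2n+1)` with
`v_k ↦ k` and `w_k ↦ n+1+k`.  `Amod n ε` has basis `v₀,…,v_{n−1}` encoded as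
`Fin n` (with `w_k = v_{n−1−k}`).  `Bmod n ε` has basis `v₀,…,v_{n−1}, u`
encoded as `Fin (n+1)` with `u ↦ n`. -/

/-- The matrix of `X` on the even module `E_n`. -/
noncomputable def EmatX (n : ℕ) : Matrix (Fin (2 * n + 1)) (Fin (2 * n + 1)) ℂ :=
  fun r c =>
    if (c : ℕ) ≤ n ∧ (r : ℕ) = n + 1 + (c : ℕ) then 1
    else if n + 1 ≤ (c : ℕ) ∧ (c : ℕ) = (r : ℕ) + (n + 1) then
      2 * (n : ℂ) + (((c : ℕ) : ℂ) - n - 1) * (4 * n - 2 - 4 * (((c : ℕ) : ℂ) - n - 1))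
    else 0

/-- The matrix of `Y` on the even module `E_n`. -/
noncomputable def EmatY (n : ℕ) : Matrix (Fin (2 * n + 1)) (Fin (2 * n + 1)) ℂ :=
  fun r c =>
    if 1 ≤ (c : ℕ) ∧ (c : ℕ) ≤ n ∧ (r : ℕ) = n + (c : ℕ) then
      ((c : ℕ) : ℂ) * (4 * n + 2 - 4 * ((c : ℕ) : ℂ))
    else if n + 1 ≤ (c : ℕ) ∧ (r : ℕ) + n = (c : ℕ) then 1
    else 0

/-- The matrix of `Z` on the even module `E_n`. -/
noncomputable def EmatZ (n : ℕ) : Matrix (Fin (2 * n + 1)) (Fin (2 * n + 1)) ℂ :=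
  fun r c =>
    if r = c then
      (if (r : ℕ) ≤ n then 2 * (n : ℂ) - 4 * ((r : ℕ) : ℂ)
        else 4 * ((r : ℕ) : ℂ) - 6 * (n : ℂ) - 2)
    else 0

/-- The matrix of `X` on the odd module `A_n^ε`. -/
noncomputable def AmatX (n : ℕ) (ε : ℂ) : Matrix (Fin n) (Fin n) ℂ :=
  fun r c =>
    if (r : ℕ) + (c : ℕ) = n - 1 then
      (if 2 * (c : ℕ) + 1 = n then ε * n
        else if 2 * (c : ℕ) < n then 1
        else 2 * (n : ℂ) - 1 + 4 * ((n : ℂ) - 1 - ((c : ℕ) : ℂ)) * ((c : ℕ) : ℂ))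
    else 0

/-- The matrix of `Y` on the odd module `A_n^ε`. -/
noncomputable def AmatY (n : ℕ) (ε : ℂ) : Matrix (Fin n) (Fin n) ℂ :=
  fun r c =>
    if (r : ℕ) + (c : ℕ) = n then
      (if 2 * (c : ℕ) = n then ε * n
        else if 2 * (c : ℕ) < n then 4 * ((c : ℕ) : ℂ) * ((n : ℂ) - ((c : ℕ) : ℂ))
        else 1)
    else 0

/-- The matrix of `Z` on the odd module `A_n^ε`. -/
noncomputable def AmatZ (n : ℕ) : Matrix (Fin n) (Fin n) ℂ :=
  fun r c => if r = c then 2 * (n : ℂ) - 1 - 4 * ((r : ℕ) : ℂ) else 0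

/-- The matrix of `X` on the odd module `B_n^ε`. -/
noncomputable def BmatX (n : ℕ) (ε : ℂ) : Matrix (Fin (n + 1)) (Fin (n + 1)) ℂ :=
  fun r c =>
    if (c : ℕ) < n ∧ (r : ℕ) + (c : ℕ) = n - 1 then
      (if 2 * (c : ℕ) + 1 = n then ε * ((n : ℂ) + 1)
        else if 2 * (c : ℕ) < n then 1
        else 4 * (n : ℂ) + 4 * ((n : ℂ) - 1 - ((c : ℕ) : ℂ)) * ((c : ℕ) : ℂ))
    else 0

/-- The matrix of `Y` on the odd module `B_n^ε`. -/
noncomputable def BmatY (n : ℕ) (ε : ℂ) : Matrix (Fin (n + 1)) (Fin (n + 1)) ℂ :=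
  fun r c =>
    if (r : ℕ) + (c : ℕ) = n then
      (if (c : ℕ) = n then (if n = 0 then ε else 1)
        else if 2 * (c : ℕ) = n then ε * ((n : ℂ) + 1)
        else if 2 * (c : ℕ) < n then
          2 * (n : ℂ) + 1 + 4 * ((c : ℕ) : ℂ) * ((n : ℂ) - ((c : ℕ) : ℂ))
        else 1)
    else 0

/-- The matrix of `Z` on the odd module `B_n^ε`. -/
noncomputable def BmatZ (n : ℕ) : Matrix (Fin (n + 1)) (Fin (n + 1)) ℂ :=
  fun r c => if r = c then 2 * (n : ℂ) - 1 - 4 * ((r : ℕ) : ℂ) else 0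

/-- A module `(V, X, Y, Z)` is isomorphic, as a module over the twisted enveloping
algebra, to the matrix model `(ℂ^d, MX, MY, MZ)`. -/
def IsIsoToModel {V : Type*} [AddCommGroup V] [Module ℂ V]
    (X Y Z : Module.End ℂ V) {d : ℕ} (MX MY MZ : Matrix (Fin d) (Fin d) ℂ) : Prop :=
  ∃ e : V ≃ₗ[ℂ] (Fin d → ℂ), ∀ v : V,
    e (X v) = Matrix.toLin' MX (e v) ∧
    e (Y v) = Matrix.toLin' MY (e v) ∧
    e (Z v) = Matrix.toLin' MZ (e v)

/-!
The relations make `X` and `Y`, applied alternately, behave like the lowering operator of `sl₂`.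
Starting from `u₀` with `Y u₀ = 0` and `Z u₀ = l u₀`, put `u_{j+1} = D_j u_j` with `D_j = X` for
even `j` and `D_j = Y` for odd `j`. Then `Z u_j = (-1)^j (l - 2j) u_j` and
`D_j u_{j+1} = (j + 1)(l - j) u_j`, so in finite dimension `l = N` is a natural number and
`u₀, …, u_N` is the whole string.

If `N = 2n` the weights `(-1)^j (N - 2j)` are distinct, and the string is a basis: this is `E_n`.
If `N = 2n - 1` then `u_j` and `u_{N-j}` have the same weight. The map `P : u₀ ↦ u_N` preserves
the highest weight vectors and satisfies `P² = (N!)²`, so one may choose `u₀` with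
`P u₀ = ± N! u₀`. This identifies `u_{N-j}` with a multiple of `u_j`, the vectors `u₀, …, u_{n-1}`
form a basis, and `u_n = ± n u_{n-1}`: this is `A_n^±`.

The last nonzero vector of the string of an arbitrary eigenvector of `Z` is killed by `X` or by
`Y`. Exchanging `X` and `Y` and negating `Z` preserves the relations, so it remains to note that
this exchange turns `A_{n+1}^±` into `B_n^±`.
-/

open scoped Nat

section AlternatingProducts

variable {R V : Type*} [Semiring R] [AddCommMonoid V] [Module R V]

/-- The factor `D_j` of an alternating product: `X` for even `j`, `Y` for odd `j`. -/
def alternatingFactor {M : Type*} (X Y : M) (j : ℕ) : M := if Even j then X else Y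

/-- The alternating product `⋯ Y X Y X` with `j` factors, the rightmost one being `X`. -/
def alternatingProd {M : Type*} [Monoid M] (X Y : M) : ℕ → M
  | 0 => 1
  | j + 1 => alternatingFactor X Y j * alternatingProd X Y j

lemma alternatingFactor_of_even {M : Type*} (X Y : M) {j : ℕ} (hj : Even j) :
    alternatingFactor X Y j = X := if_pos hj

lemma alternatingFactor_of_odd {M : Type*} (X Y : M) {j : ℕ} (hj : Odd j) :
    alternatingFactor X Y j = Y := if_neg (Nat.not_even_iff_odd.2 hj)

lemma alternatingFactor_eq_of_even_add {M : Type*} (X Y : M) {i j : ℕ} (hij : Even (i + j)) :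
    alternatingFactor X Y i = alternatingFactor X Y j := by
  simp only [alternatingFactor, Nat.even_add.1 hij]

lemma alternatingProd_succ_apply (X Y : Module.End R V) (j : ℕ) (v : V) :
    alternatingProd X Y (j + 1) v = alternatingFactor X Y j (alternatingProd X Y j v) := rfl

lemma alternatingProd_two_mul_add_one_apply (X Y : Module.End R V) (k : ℕ) (v : V) :
    alternatingProd X Y (2 * k + 1) v = X (alternatingProd X Y (2 * k) v) := by
  rw [alternatingProd_succ_apply, alternatingFactor_of_even X Y (even_two_mul k)]

lemma alternatingProd_two_mul_add_two_apply (X Y : Module.End R V) (k : ℕ) (v : V) :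
    alternatingProd X Y (2 * k + 2) v = Y (alternatingProd X Y (2 * k + 1) v) := by
  rw [alternatingProd_succ_apply, alternatingFactor_of_odd X Y (odd_two_mul_add_one k)]

lemma alternatingProd_apply_eq_zero_of_le {X Y : Module.End R V} {v : V} {i j : ℕ} (hij : i ≤ j)
    (hi : alternatingProd X Y i v = 0) :
    alternatingProd X Y j v = 0 := by
  induction hij with
  | refl => exact hi
  | step _ ih => rw [alternatingProd_succ_apply, ih, map_zero]

end AlternatingProducts

/-- The defining relations of the twisted enveloping algebra of `sl₂`, for three endomorphisms. -/
structure IsTwistedTriple {R V : Type*} [CommRing R] [AddCommGroup V] [Module R V]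
    (X Y Z : Module.End R V) : Prop where
  anticomm_left : X * Z + Z * X = (2 : R) • X
  anticomm_right : Y * Z + Z * Y = (-2 : R) • Y
  sq_sub_sq : X * X - Y * Y = Z

/-- A highest weight vector of weight `l`, with `Y` in the role of the raising operator. -/
structure IsPrimitiveVector {R V : Type*} [CommRing R] [AddCommGroup V] [Module R V]
    (Y Z : Module.End R V) (v : V) (l : R) : Prop where
  ne_zero : v ≠ 0
  apply_eq_zero : Y v = 0
  apply_eq_smul : Z v = l • v

namespace IsTwistedTriple

section Strings

variable {R V : Type*} [CommRing R] [AddCommGroup V] [Module R V] {X Y Z : Module.End R V}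

lemma swap (h : IsTwistedTriple X Y Z) : IsTwistedTriple Y X (-Z) where
  anticomm_left := by rw [mul_neg, neg_mul, ← neg_add, h.anticomm_right, neg_smul, neg_neg]
  anticomm_right := by rw [mul_neg, neg_mul, ← neg_add, h.anticomm_left, neg_smul]
  sq_sub_sq := by rw [← h.sq_sub_sq, neg_sub]

lemma apply_alternatingFactor (h : IsTwistedTriple X Y Z) (j : ℕ) (v : V) :
    Z (alternatingFactor X Y j v) =
      (2 * (-1) ^ j : R) • alternatingFactor X Y j v - alternatingFactor X Y j (Z v) := by
  rcases Nat.even_or_odd j with hj | hj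
  · rw [alternatingFactor_of_even X Y hj, hj.neg_one_pow, mul_one, eq_sub_iff_add_eq']
    exact LinearMap.congr_fun h.anticomm_left v
  · rw [alternatingFactor_of_odd X Y hj, hj.neg_one_pow, mul_neg_one, eq_sub_iff_add_eq']
    exact LinearMap.congr_fun h.anticomm_right v

lemma alternatingFactor_sq_sub_succ_sq (h : IsTwistedTriple X Y Z) (j : ℕ) (v : V) :
    alternatingFactor X Y j (alternatingFactor X Y j v) -
      alternatingFactor X Y (j + 1) (alternatingFactor X Y (j + 1) v) = (-1 : R) ^ j • Z v := by
  rw [← h.sq_sub_sq]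
  rcases Nat.even_or_odd j with hj | hj
  · rw [alternatingFactor_of_even X Y hj, alternatingFactor_of_odd X Y hj.add_one,
      hj.neg_one_pow, one_smul]
    rfl
  · rw [alternatingFactor_of_odd X Y hj, alternatingFactor_of_even X Y hj.add_one,
      hj.neg_one_pow, neg_one_smul, LinearMap.sub_apply, neg_sub]
    rfl

lemma apply_alternatingProd (h : IsTwistedTriple X Y Z) {v : V} {l : R} (hv : Z v = l • v)
    (j : ℕ) :
    Z (alternatingProd X Y j v) = ((-1) ^ j * (l - 2 * j)) • alternatingProd X Y j v := by
  induction j with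
  | zero => simpa [alternatingProd] using hv
  | succ j ih =>
    rw [alternatingProd_succ_apply, h.apply_alternatingFactor, ih, map_smul, ← sub_smul]
    congr 1
    push_cast
    ring

lemma alternatingFactor_alternatingProd_succ (h : IsTwistedTriple X Y Z) {v : V} {l : R}
    (hv : IsPrimitiveVector Y Z v l) (j : ℕ) :
    alternatingFactor X Y j (alternatingProd X Y (j + 1) v) =
      ((j + 1) * (l - j) : R) • alternatingProd X Y j v := by
  induction j with
  | zero =>
    have hXX : X (X v) - Y (Y v) = Z v := LinearMap.congr_fun h.sq_sub_sq v
    rw [hv.apply_eq_zero, map_zero, sub_zero, hv.apply_eq_smul] at hXX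
    simpa [alternatingProd, alternatingFactor] using hXX
  | succ j ih =>
    have hsq := h.alternatingFactor_sq_sub_succ_sq j (alternatingProd X Y (j + 1) v)
    rw [ih, map_smul, ← alternatingProd_succ_apply, sub_eq_iff_eq_add, ← sub_eq_iff_eq_add',
      h.apply_alternatingProd hv.apply_eq_smul, smul_smul, ← sub_smul] at hsq
    have hsign : (-1 : R) ^ j * (-1) ^ j = 1 := by rw [← mul_pow]; simp
    rw [alternatingProd_succ_apply X Y (j + 1), ← hsq]
    congr 1
    push_cast
    linear_combination (l - 2 * j - 2) * hsign

lemma left_apply_alternatingProd_odd (h : IsTwistedTriple X Y Z) {v : V} {l : R}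
    (hv : IsPrimitiveVector Y Z v l) (k : ℕ) :
    X (alternatingProd X Y (2 * k + 1) v) =
      ((2 * k + 1) * (l - 2 * k) : R) • alternatingProd X Y (2 * k) v := by
  have hback := h.alternatingFactor_alternatingProd_succ hv (2 * k)
  rw [alternatingFactor_of_even X Y (even_two_mul k)] at hback
  exact_mod_cast hback

lemma right_apply_alternatingProd_even (h : IsTwistedTriple X Y Z) {v : V} {l : R}
    (hv : IsPrimitiveVector Y Z v l) (k : ℕ) :
    Y (alternatingProd X Y (2 * k + 2) v) =
      ((2 * k + 2) * (l - (2 * k + 1)) : R) • alternatingProd X Y (2 * k + 1) v := by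
  have hback := h.alternatingFactor_alternatingProd_succ hv (2 * k + 1)
  rw [alternatingFactor_of_odd X Y (odd_two_mul_add_one k)] at hback
  rw [hback]
  congr 1
  push_cast
  ring

end Strings

section HighestWeight

variable {K V : Type*} [Field K] [CharZero K] [AddCommGroup V] [Module K V]
  {X Y Z : Module.End K V}

lemma exists_alternatingProd_eq_zero [FiniteDimensional K V] (h : IsTwistedTriple X Y Z)
    {v : V} {l : K} (hv : Z v = l • v) : ∃ j, alternatingProd X Y j v = 0 := by
  by_contra! hne
  have heigen (k : ℕ) : Z.HasEigenvalue (l - 4 * k) := by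
    refine Module.End.hasEigenvalue_of_hasEigenvector
      (x := alternatingProd X Y (2 * k) v) ⟨Module.End.mem_eigenspace_iff.2 ?_, hne _⟩
    rw [h.apply_alternatingProd hv, (even_two_mul k).neg_one_pow]
    congr 1
    push_cast
    ring
  have hinj : Function.Injective fun k : ℕ ↦ l - 4 * (k : K) := fun a b hab ↦ by
    simpa using hab
  exact Set.infinite_of_injective_forall_mem hinj heigen Z.finite_hasEigenvalue

lemma exists_last_alternatingProd [FiniteDimensional K V] (h : IsTwistedTriple X Y Z)
    {v : V} {l : K} (hne : v ≠ 0) (hv : Z v = l • v) :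
    ∃ N, alternatingProd X Y N v ≠ 0 ∧ alternatingProd X Y (N + 1) v = 0 :=
  Nat.exists_not_and_succ_of_not_zero_of_exists (p := fun j ↦ alternatingProd X Y j v = 0) hne
    (h.exists_alternatingProd_eq_zero hv)

lemma exists_isPrimitiveVector_of_apply_eq_smul [FiniteDimensional K V]
    (h : IsTwistedTriple X Y Z) {v : V} {l : K} (hne : v ≠ 0) (hv : Z v = l • v) :
    (∃ u m, IsPrimitiveVector Y Z u m) ∨ ∃ u m, IsPrimitiveVector X (-Z) u m := by
  obtain ⟨N, hN, hend⟩ := h.exists_last_alternatingProd hne hv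
  rw [alternatingProd_succ_apply] at hend
  have hZ := h.apply_alternatingProd hv N
  rcases Nat.even_or_odd N with hN2 | hN2
  · rw [alternatingFactor_of_even X Y hN2] at hend
    exact Or.inr ⟨_, _, hN, hend, by rw [LinearMap.neg_apply, hZ, ← neg_smul]⟩
  · rw [alternatingFactor_of_odd X Y hN2] at hend
    exact Or.inl ⟨_, _, hN, hend, hZ⟩

lemma exists_weight_eq_natCast [FiniteDimensional K V] (h : IsTwistedTriple X Y Z) {v : V} {l : K}
    (hv : IsPrimitiveVector Y Z v l) :
    ∃ N : ℕ, l = N ∧ alternatingProd X Y N v ≠ 0 ∧ alternatingProd X Y (N + 1) v = 0 := by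
  obtain ⟨N, hN, hend⟩ := h.exists_last_alternatingProd hv.ne_zero hv.apply_eq_smul
  have hback := h.alternatingFactor_alternatingProd_succ hv N
  rw [hend, map_zero, eq_comm, smul_eq_zero_iff_left hN, mul_eq_zero, sub_eq_zero] at hback
  exact ⟨N, hback.resolve_left N.cast_add_one_ne_zero, hN, hend⟩

section NaturalWeight

variable [FiniteDimensional K V] {v : V} {N : ℕ}

lemma alternatingProd_ne_zero (h : IsTwistedTriple X Y Z) (hv : IsPrimitiveVector Y Z v (N : K))
    {j : ℕ} (hj : j ≤ N) : alternatingProd X Y j v ≠ 0 := by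
  obtain ⟨N', hN', hne, -⟩ := h.exists_weight_eq_natCast hv
  obtain rfl := Nat.cast_injective hN'
  exact fun hzero ↦ hne (alternatingProd_apply_eq_zero_of_le hj hzero)

lemma alternatingProd_succ_weight (h : IsTwistedTriple X Y Z)
    (hv : IsPrimitiveVector Y Z v (N : K)) : alternatingProd X Y (N + 1) v = 0 := by
  obtain ⟨N', hN', -, hend⟩ := h.exists_weight_eq_natCast hv
  obtain rfl := Nat.cast_injective hN'
  exact hend

lemma hasEigenvector_alternatingProd (h : IsTwistedTriple X Y Z)
    (hv : IsPrimitiveVector Y Z v (N : K)) {j : ℕ} (hj : j ≤ N) :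
    Z.HasEigenvector ((-1) ^ j * (N - 2 * j) : K) (alternatingProd X Y j v) :=
  ⟨Module.End.mem_eigenspace_iff.2 (h.apply_alternatingProd hv.apply_eq_smul j),
    h.alternatingProd_ne_zero hv hj⟩

lemma isPrimitiveVector_last_of_even (h : IsTwistedTriple X Y Z)
    (hv : IsPrimitiveVector Y Z v (N : K)) (hN : Even N) :
    IsPrimitiveVector X (-Z) (alternatingProd X Y N v) (N : K) where
  ne_zero := h.alternatingProd_ne_zero hv le_rfl
  apply_eq_zero := by
    rw [← h.alternatingProd_succ_weight hv, alternatingProd_succ_apply,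
      alternatingFactor_of_even X Y hN]
  apply_eq_smul := by
    rw [LinearMap.neg_apply, h.apply_alternatingProd hv.apply_eq_smul, hN.neg_one_pow, ← neg_smul]
    congr 1
    ring

lemma isPrimitiveVector_last_of_odd (h : IsTwistedTriple X Y Z)
    (hv : IsPrimitiveVector Y Z v (N : K)) (hN : Odd N) :
    IsPrimitiveVector Y Z (alternatingProd X Y N v) (N : K) where
  ne_zero := h.alternatingProd_ne_zero hv le_rfl
  apply_eq_zero := by
    rw [← h.alternatingProd_succ_weight hv, alternatingProd_succ_apply,
      alternatingFactor_of_odd X Y hN]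
  apply_eq_smul := by
    rw [h.apply_alternatingProd hv.apply_eq_smul, hN.neg_one_pow]
    congr 1
    ring

end NaturalWeight

/-- Up to scalars, the string started at the last vector is the given string read backwards. -/
lemma factorial_smul_alternatingProd_last (h : IsTwistedTriple X Y Z) {v : V} {i j N : ℕ}
    (hv : IsPrimitiveVector Y Z v (N : K)) (hN : Odd N) (hij : i + j = N) :
    (i ! : K) • alternatingProd X Y j (alternatingProd X Y N v) =
      (N ! * j ! : K) • alternatingProd X Y i v := by
  induction j generalizing i with
  | zero =>
    obtain rfl : i = N := hij
    simp [alternatingProd]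
  | succ j ih =>
    have hfactor : alternatingFactor X Y j = alternatingFactor X Y i :=
      alternatingFactor_eq_of_even_add X Y (by grind)
    have hNij : (N : K) - i = j + 1 := by rw [← hij]; push_cast; ring
    have hstep := DFunLike.congr_arg (alternatingFactor X Y j) (ih (i := i + 1) (by lia))
    rw [map_smul, map_smul, ← alternatingProd_succ_apply, hfactor,
      h.alternatingFactor_alternatingProd_succ hv, hNij] at hstep
    apply smul_right_injective V (i.cast_add_one_ne_zero : (i + 1 : K) ≠ 0)
    calc (i + 1 : K) • (i ! : K) • alternatingProd X Y (j + 1) (alternatingProd X Y N v)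
        = ((i + 1) ! : K) • alternatingProd X Y (j + 1) (alternatingProd X Y N v) := by
          rw [smul_smul, Nat.factorial_succ]; push_cast; rfl
      _ = (N ! * j ! : K) • ((i + 1) * (j + 1) : K) • alternatingProd X Y i v := hstep
      _ = (i + 1 : K) • (N ! * (j + 1) ! : K) • alternatingProd X Y i v := by
          rw [smul_smul, smul_smul, Nat.factorial_succ]; push_cast; congr 1; ring

lemma exists_isPrimitiveVector_last_eq_smul [FiniteDimensional K V] (h : IsTwistedTriple X Y Z)
    {v : V} {N : ℕ} (hv : IsPrimitiveVector Y Z v (N : K)) (hN : Odd N) :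
    ∃ (u : V) (ε : K), (ε = 1 ∨ ε = -1) ∧ IsPrimitiveVector Y Z u (N : K) ∧
      alternatingProd X Y N u = (ε * N !) • u := by
  set P := alternatingProd X Y N
  have hPP : P (P v) = (N ! * N ! : K) • v := by
    simpa [alternatingProd] using h.factorial_smul_alternatingProd_last hv hN (zero_add N)
  by_cases hneg : P v = (-1 * N ! : K) • v
  · exact ⟨v, -1, Or.inr rfl, hv, hneg⟩
  have hPv := h.isPrimitiveVector_last_of_odd hv hN
  refine ⟨P v + (N ! : K) • v, 1, Or.inl rfl, ⟨fun hzero ↦ hneg ?_, ?_, ?_⟩, ?_⟩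
  · rw [neg_one_mul, neg_smul]
    exact eq_neg_of_add_eq_zero_left hzero
  · rw [map_add, map_smul, hPv.apply_eq_zero, hv.apply_eq_zero, smul_zero, add_zero]
  · rw [map_add, map_smul, hPv.apply_eq_smul, hv.apply_eq_smul, smul_add, smul_comm]
  · rw [map_add, map_smul, hPP]
    module

lemma exists_isPrimitiveVector_middle_eq_smul [FiniteDimensional K V] (h : IsTwistedTriple X Y Z)
    {v : V} {n : ℕ} (hv : IsPrimitiveVector Y Z v ((2 * n + 1 : ℕ) : K)) :
    ∃ (u : V) (ε : K), (ε = 1 ∨ ε = -1) ∧ IsPrimitiveVector Y Z u ((2 * n + 1 : ℕ) : K) ∧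
      alternatingProd X Y (n + 1) u = (ε * (n + 1)) • alternatingProd X Y n u := by
  have hodd : Odd (2 * n + 1) := odd_two_mul_add_one n
  obtain ⟨u, ε, hε, hu, hlast⟩ := h.exists_isPrimitiveVector_last_eq_smul hv hodd
  refine ⟨u, ε, hε, hu, ?_⟩
  have hεε : ε * ε = 1 := mul_self_eq_one_iff.2 hε
  have hmid := h.factorial_smul_alternatingProd_last hu hodd (show n + (n + 1) = 2 * n + 1 by ring)
  rw [hlast, map_smul, smul_smul, Nat.factorial_succ n] at hmid
  have hc : (n ! * (2 * n + 1)! : K) ≠ 0 :=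
    mul_ne_zero (Nat.cast_ne_zero.2 n.factorial_ne_zero)
      (Nat.cast_ne_zero.2 (2 * n + 1).factorial_ne_zero)
  apply smul_right_injective V hc
  calc (n ! * (2 * n + 1)! : K) • alternatingProd X Y (n + 1) u
      = ε • (n ! * (ε * (2 * n + 1)!) : K) • alternatingProd X Y (n + 1) u := by
        rw [smul_smul]; congr 1; linear_combination (-(n ! * (2 * n + 1)!) : K) * hεε
    _ = (n ! * (2 * n + 1)! : K) • (ε * (n + 1)) • alternatingProd X Y n u := by
        rw [hmid, smul_smul, smul_smul]; push_cast; congr 1; ring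

lemma exists_isPrimitiveVector_even_or_odd [IsAlgClosed K] [FiniteDimensional K V] [Nontrivial V]
    (h : IsTwistedTriple X Y Z) :
    (∃ (n : ℕ) (v : V), IsPrimitiveVector Y Z v ((2 * n : ℕ) : K)) ∨
      (∃ (n : ℕ) (v : V), IsPrimitiveVector Y Z v ((2 * n + 1 : ℕ) : K)) ∨
      ∃ (n : ℕ) (v : V), IsPrimitiveVector X (-Z) v ((2 * n + 1 : ℕ) : K) := by
  obtain ⟨l, hl⟩ := Module.End.exists_eigenvalue Z
  obtain ⟨w, hw⟩ := hl.exists_hasEigenvector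
  rcases h.exists_isPrimitiveVector_of_apply_eq_smul hw.2 hw.apply_eq_smul with
    ⟨u, m, hu⟩ | ⟨u, m, hu⟩
  · obtain ⟨N, rfl, -⟩ := h.exists_weight_eq_natCast hu
    rcases N.even_or_odd' with ⟨n, rfl | rfl⟩
    · exact Or.inl ⟨n, u, hu⟩
    · exact Or.inr (Or.inl ⟨n, u, hu⟩)
  · obtain ⟨N, rfl, -⟩ := h.swap.exists_weight_eq_natCast hu
    rcases N.even_or_odd' with ⟨n, rfl | rfl⟩
    · have hlast := h.swap.isPrimitiveVector_last_of_even hu (even_two_mul n)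
      rw [neg_neg] at hlast
      exact Or.inl ⟨n, _, hlast⟩
    · exact Or.inr (Or.inr ⟨n, u, hu⟩)

end HighestWeight

end IsTwistedTriple

/-- Irreducibility of a module over the twisted enveloping algebra, up to non-vanishing. As
`Z = X² - Y²`, stability under `Z` need not be mentioned. -/
def IsIrreduciblePair {R V : Type*} [Semiring R] [AddCommMonoid V] [Module R V]
    (X Y : Module.End R V) : Prop :=
  ∀ W : Submodule R V, W ∈ X.invtSubmodule → W ∈ Y.invtSubmodule → W = ⊥ ∨ W = ⊤

section IsomorphismCriteria

lemma IsIrreduciblePair.swap {R V : Type*} [Semiring R] [AddCommMonoid V] [Module R V]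
    {X Y : Module.End R V} (h : IsIrreduciblePair X Y) : IsIrreduciblePair Y X :=
  fun W hY hX ↦ h W hX hY

lemma span_range_mem_invtSubmodule {R V ι : Type*} [Semiring R] [AddCommMonoid V] [Module R V]
    [Fintype ι] {T : Module.End R V} {M : Matrix ι ι R} {f : ι → V}
    (hT : ∀ c, T (f c) = ∑ r, M r c • f r) :
    Submodule.span R (Set.range f) ∈ T.invtSubmodule := by
  rw [Module.End.mem_invtSubmodule, Submodule.span_le]
  rintro _ ⟨c, rfl⟩
  rw [SetLike.mem_coe, Submodule.mem_comap, hT]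
  exact sum_mem fun r _ ↦ Submodule.smul_mem _ _ (Submodule.subset_span ⟨r, rfl⟩)

lemma eq_sum_smul_of_eq_smul {R V ι : Type*} [Semiring R] [AddCommMonoid V] [Module R V]
    [Fintype ι] {x : V} {a : ι → R} {f : ι → V} (i : ι) (ha : ∀ j ≠ i, a j = 0)
    (hx : x = a i • f i) : x = ∑ j, a j • f j := by
  rw [Fintype.sum_eq_single i fun j hj ↦ by rw [ha j hj, zero_smul], hx]

lemma toMatrix_eq_of_apply_eq_sum {R V ι : Type*} [CommSemiring R] [AddCommMonoid V] [Module R V]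
    [Fintype ι] [DecidableEq ι] (b : Module.Basis ι R V) {T : Module.End R V} {M : Matrix ι ι R}
    (hT : ∀ c, T (b c) = ∑ r, M r c • b r) : LinearMap.toMatrix b b T = M := by
  have hT' : T = Matrix.toLin b b M := b.ext fun c ↦ by rw [hT, Matrix.toLin_self]
  rw [hT', LinearMap.toMatrix_toLin]

lemma isIsoToModel_toMatrix {V : Type*} [AddCommGroup V] [Module ℂ V] {d : ℕ}
    (b : Module.Basis (Fin d) ℂ V) (X Y Z : Module.End ℂ V) :
    IsIsoToModel X Y Z (LinearMap.toMatrix b b X) (LinearMap.toMatrix b b Y)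
      (LinearMap.toMatrix b b Z) := by
  have hrepr (T : Module.End ℂ V) (v : V) :
      b.equivFun (T v) = Matrix.toLin' (LinearMap.toMatrix b b T) (b.equivFun v) :=
    (LinearMap.toMatrix_mulVec_repr b b T v).symm
  exact ⟨b.equivFun, fun v ↦ ⟨hrepr X v, hrepr Y v, hrepr Z v⟩⟩

lemma IsIrreduciblePair.isIsoToModel_diagonal {V : Type*} [AddCommGroup V] [Module ℂ V]
    {X Y Z : Module.End ℂ V} (hirr : IsIrreduciblePair X Y) {d : ℕ} [NeZero d]
    {MX MY : Matrix (Fin d) (Fin d) ℂ} {f : Fin d → V} {μ : Fin d → ℂ}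
    (hμ : Function.Injective μ) (hZ : ∀ c, Z.HasEigenvector (μ c) (f c))
    (hX : ∀ c, X (f c) = ∑ r, MX r c • f r) (hY : ∀ c, Y (f c) = ∑ r, MY r c • f r) :
    IsIsoToModel X Y Z MX MY (Matrix.diagonal μ) := by
  have hli : LinearIndependent ℂ f := Module.End.eigenvectors_linearIndependent' Z μ hμ f hZ
  have hspan : Submodule.span ℂ (Set.range f) = ⊤ :=
    (hirr _ (span_range_mem_invtSubmodule hX) (span_range_mem_invtSubmodule hY)).resolve_left
      fun hbot ↦ (hZ 0).2 (Submodule.span_eq_bot.1 hbot _ ⟨0, rfl⟩)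
  let b := Module.Basis.mk hli hspan.ge
  have hb : ⇑b = f := Module.Basis.coe_mk hli hspan.ge
  have hZb (c : Fin d) : Z (b c) = ∑ r, Matrix.diagonal μ r c • b r := by
    simp only [hb, (hZ c).apply_eq_smul, Matrix.diagonal_apply, ite_smul, zero_smul,
      Finset.sum_ite_eq', Finset.mem_univ, if_true]
  rw [← hb] at hX hY
  rw [← toMatrix_eq_of_apply_eq_sum b hX, ← toMatrix_eq_of_apply_eq_sum b hY,
    ← toMatrix_eq_of_apply_eq_sum b hZb]
  exact isIsoToModel_toMatrix b X Y Z

variable {V : Type*} [AddCommGroup V] [Module ℂ V] {X Y Z : Module.End ℂ V} {d : ℕ}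
  {MX MY MZ : Matrix (Fin d) (Fin d) ℂ}

lemma IsIsoToModel.swap (h : IsIsoToModel X Y Z MX MY MZ) :
    IsIsoToModel Y X (-Z) MY MX (-MZ) := by
  obtain ⟨e, he⟩ := h
  refine ⟨e, fun v ↦ ⟨(he v).2.1, (he v).1, ?_⟩⟩
  rw [LinearMap.neg_apply, map_neg, (he v).2.2, map_neg, LinearMap.neg_apply]

lemma IsIsoToModel.submatrix (h : IsIsoToModel X Y Z MX MY MZ) (σ : Equiv.Perm (Fin d)) :
    IsIsoToModel X Y Z (MX.submatrix σ σ) (MY.submatrix σ σ) (MZ.submatrix σ σ) := by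
  obtain ⟨e, he⟩ := h
  have hperm (M : Matrix (Fin d) (Fin d) ℂ) (x : Fin d → ℂ) :
      Matrix.toLin' (M.submatrix σ σ) (x ∘ σ) = Matrix.toLin' M x ∘ σ := by
    rw [Matrix.toLin'_apply, Matrix.submatrix_mulVec_equiv, Function.comp_assoc,
      Equiv.self_comp_symm, Function.comp_id, Matrix.toLin'_apply]
  refine ⟨e.trans (LinearEquiv.funCongrLeft ℂ ℂ σ), fun v ↦ ?_⟩
  refine ⟨.trans ?_ (hperm MX (e v)).symm, .trans ?_ (hperm MY (e v)).symm,
    .trans ?_ (hperm MZ (e v)).symm⟩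
  · rw [← (he v).1]; rfl
  · rw [← (he v).2.1]; rfl
  · rw [← (he v).2.2]; rfl

end IsomorphismCriteria

section Models

/-- The position in the alternating string of the `c`-th basis vector of `E_n`. -/
def evenPosition (n c : ℕ) : ℕ := if c ≤ n then 2 * c else 2 * (c - (n + 1)) + 1

/-- The position in the alternating string of the `c`-th basis vector of `A_{n+1}^±`, namely `2k`
for `v_k` and `2k + 1` for `w_k`, whichever is at most `n`. -/
def oddPosition (n c : ℕ) : ℕ := if 2 * c ≤ n then 2 * c else 2 * (n - c) + 1

lemma EmatZ_eq_diagonal (n : ℕ) :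
    EmatZ n = Matrix.diagonal fun c : Fin (2 * n + 1) ↦
      (-1) ^ evenPosition n c * (((2 * n : ℕ) : ℂ) - 2 * evenPosition n c) := by
  ext r c
  rw [EmatZ, Matrix.diagonal_apply, evenPosition]
  congr 1
  split_ifs with h
  · rw [(even_two_mul _).neg_one_pow]
    push_cast
    ring
  · rw [(odd_two_mul_add_one _).neg_one_pow]
    push_cast [Nat.cast_sub (not_le.1 h)]
    ring

lemma AmatZ_succ_eq_diagonal (n : ℕ) :
    AmatZ (n + 1) = Matrix.diagonal fun c : Fin (n + 1) ↦
      (-1) ^ oddPosition n c * (((2 * n + 1 : ℕ) : ℂ) - 2 * oddPosition n c) := by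
  ext r c
  rw [AmatZ, Matrix.diagonal_apply, oddPosition]
  congr 1
  split_ifs with h
  · rw [(even_two_mul _).neg_one_pow]
    push_cast
    ring
  · rw [(odd_two_mul_add_one _).neg_one_pow]
    push_cast [Nat.cast_sub (Nat.le_of_lt_succ r.isLt)]
    ring

lemma EmatZ_diag_injective (n : ℕ) : Function.Injective (EmatZ n).diag := by
  have hdiag (c : Fin (2 * n + 1)) : (EmatZ n).diag c =
      ((if (c : ℕ) ≤ n then 2 * n - 4 * c else 4 * c - 6 * n - 2 : ℤ) : ℂ) := by
    simp [EmatZ]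
  intro a b hab
  rw [hdiag, hdiag, Int.cast_inj] at hab
  grind

lemma AmatZ_diag_injective (n : ℕ) : Function.Injective (AmatZ n).diag := fun a b hab ↦ by
  simpa [AmatZ, Fin.val_inj] using hab

lemma evenPosition_le {n c : ℕ} (hc : c < 2 * n + 1) : evenPosition n c ≤ 2 * n := by
  grind [evenPosition]

lemma oddPosition_le {n c : ℕ} (hc : c < n + 1) : oddPosition n c ≤ n := by
  grind [oddPosition]

lemma BmatX_eq_submatrix (n : ℕ) (ε : ℂ) :
    BmatX n ε = (AmatY (n + 1) ε).submatrix Fin.revPerm Fin.revPerm := by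
  ext r c
  obtain ⟨k, hk⟩ := Nat.exists_eq_add_of_le (Nat.le_of_lt_succ c.isLt)
  have hkc : n + 1 - (c + 1) = k := by lia
  have hnc : (n : ℂ) = c + k := by exact_mod_cast hk
  simp only [BmatX, AmatY, Matrix.submatrix_apply, Fin.revPerm_apply, Fin.val_rev, hkc]
  split_ifs <;> first | rfl | lia | skip
  push_cast [hnc]
  ring

lemma BmatY_eq_submatrix (n : ℕ) (ε : ℂ) :
    BmatY n ε = (AmatX (n + 1) ε).submatrix Fin.revPerm Fin.revPerm := by
  ext r c
  obtain ⟨k, hk⟩ := Nat.exists_eq_add_of_le (Nat.le_of_lt_succ c.isLt)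
  have hkc : n + 1 - (c + 1) = k := by lia
  have hnc : (n : ℂ) = c + k := by exact_mod_cast hk
  simp only [BmatY, AmatX, Matrix.submatrix_apply, Fin.revPerm_apply, Fin.val_rev, hkc]
  split_ifs <;> first | rfl | lia | skip
  · rw [show n = 0 by lia, zero_add, Nat.cast_one, mul_one]
  · push_cast [hnc]
    ring

lemma BmatZ_eq_submatrix (n : ℕ) :
    BmatZ n = (-AmatZ (n + 1)).submatrix Fin.revPerm Fin.revPerm := by
  ext r c
  have hr : (r : ℕ) ≤ n := Nat.le_of_lt_succ r.isLt
  simp only [BmatZ, AmatZ, Matrix.submatrix_apply, Matrix.neg_apply, Fin.revPerm_apply,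
    Fin.rev_inj, Fin.val_rev, Nat.add_sub_add_right]
  split_ifs
  · push_cast [Nat.cast_sub hr]
    ring
  · exact neg_zero.symm

lemma isIsoToModel_B_of_swap {V : Type*} [AddCommGroup V] [Module ℂ V] {X Y Z : Module.End ℂ V}
    {n : ℕ} {ε : ℂ}
    (h : IsIsoToModel Y X (-Z) (AmatX (n + 1) ε) (AmatY (n + 1) ε) (AmatZ (n + 1))) :
    IsIsoToModel X Y Z (BmatX n ε) (BmatY n ε) (BmatZ n) := by
  rw [BmatX_eq_submatrix, BmatY_eq_submatrix, BmatZ_eq_submatrix, ← neg_neg Z]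
  exact h.swap.submatrix Fin.revPerm

namespace IsTwistedTriple

variable {V : Type*} [AddCommGroup V] [Module ℂ V]
  {X Y Z : Module.End ℂ V} {v : V} {n : ℕ}

lemma left_apply_evenPosition [FiniteDimensional ℂ V] (h : IsTwistedTriple X Y Z)
    (hv : IsPrimitiveVector Y Z v ((2 * n : ℕ) : ℂ)) (c : Fin (2 * n + 1)) :
    X (alternatingProd X Y (evenPosition n c) v) =
      ∑ r, EmatX n r c • alternatingProd X Y (evenPosition n r) v := by
  rcases lt_trichotomy (c : ℕ) n with hc | hc | hc
  · refine eq_sum_smul_of_eq_smul ⟨n + 1 + c, by lia⟩ (by grind [EmatX]) ?_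
    rw [show EmatX n _ c = 1 by grind [EmatX], one_smul,
      show evenPosition n c = 2 * c by grind [evenPosition],
      show evenPosition n (n + 1 + c) = 2 * c + 1 by grind [evenPosition],
      alternatingProd_two_mul_add_one_apply]
  · refine eq_sum_smul_of_eq_smul c (by grind [EmatX]) ?_
    rw [show EmatX n c c = 0 by grind [EmatX], zero_smul,
      show evenPosition n c = 2 * n by grind [evenPosition],
      ← alternatingProd_two_mul_add_one_apply, h.alternatingProd_succ_weight hv]
  · obtain ⟨k, hk⟩ := Nat.exists_eq_add_of_lt hc
    refine eq_sum_smul_of_eq_smul ⟨k, by lia⟩ (by grind [EmatX]) ?_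
    rw [show evenPosition n c = 2 * k + 1 by grind [evenPosition],
      show evenPosition n k = 2 * k by grind [evenPosition], h.left_apply_alternatingProd_odd hv]
    congr 1
    rw [EmatX, if_neg (by grind), if_pos (by grind), hk]
    push_cast
    ring

lemma right_apply_evenPosition (h : IsTwistedTriple X Y Z)
    (hv : IsPrimitiveVector Y Z v ((2 * n : ℕ) : ℂ)) (c : Fin (2 * n + 1)) :
    Y (alternatingProd X Y (evenPosition n c) v) =
      ∑ r, EmatY n r c • alternatingProd X Y (evenPosition n r) v := by
  by_cases hc : (c : ℕ) ≤ n
  · rcases hc0 : (c : ℕ) with _ | k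
    · refine eq_sum_smul_of_eq_smul c (by grind [EmatY]) ?_
      rw [show EmatY n c c = 0 by grind [EmatY], zero_smul]
      exact hv.apply_eq_zero
    · refine eq_sum_smul_of_eq_smul ⟨n + 1 + k, by lia⟩ (by grind [EmatY]) ?_
      rw [show evenPosition n (k + 1) = 2 * k + 2 by grind [evenPosition],
        show evenPosition n (n + 1 + k) = 2 * k + 1 by grind [evenPosition],
        h.right_apply_alternatingProd_even hv]
      congr 1
      rw [EmatY, if_pos (by grind), hc0]
      push_cast
      ring
  · obtain ⟨k, hk⟩ := Nat.exists_eq_add_of_lt (not_le.1 hc)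
    refine eq_sum_smul_of_eq_smul ⟨k + 1, by lia⟩ (by grind [EmatY]) ?_
    rw [show EmatY n _ c = 1 by grind [EmatY], one_smul,
      show evenPosition n c = 2 * k + 1 by grind [evenPosition],
      show evenPosition n (k + 1) = 2 * k + 2 by grind [evenPosition],
      alternatingProd_two_mul_add_two_apply]

lemma left_apply_oddPosition (h : IsTwistedTriple X Y Z)
    (hv : IsPrimitiveVector Y Z v ((2 * n + 1 : ℕ) : ℂ)) {ε : ℂ}
    (hmid : alternatingProd X Y (n + 1) v = (ε * (n + 1)) • alternatingProd X Y n v)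
    (c : Fin (n + 1)) :
    X (alternatingProd X Y (oddPosition n c) v) =
      ∑ r, AmatX (n + 1) ε r c • alternatingProd X Y (oddPosition n r) v := by
  have hcn : (c : ℕ) ≤ n := Nat.le_of_lt_succ c.isLt
  refine eq_sum_smul_of_eq_smul c.rev (by grind [AmatX]) ?_
  rw [AmatX, if_pos (by grind), show (c.rev : ℕ) = n - c by grind]
  rcases lt_trichotomy (2 * c : ℕ) n with hc | hc | hc
  · rw [if_neg (by lia), if_pos (by lia), one_smul,
      show oddPosition n c = 2 * c by grind [oddPosition],
      show oddPosition n (n - c) = 2 * c + 1 by grind [oddPosition],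
      alternatingProd_two_mul_add_one_apply]
  · rw [if_pos (by lia), show oddPosition n c = 2 * c by grind [oddPosition],
      show oddPosition n (n - c) = 2 * c by grind [oddPosition],
      ← alternatingProd_two_mul_add_one_apply, hc, hmid, Nat.cast_add_one]
  · obtain ⟨k, hk⟩ := Nat.exists_eq_add_of_le hcn
    rw [if_neg (by lia), if_neg (by lia),
      show oddPosition n c = 2 * k + 1 by grind [oddPosition],
      show oddPosition n (n - c) = 2 * k by grind [oddPosition],
      h.left_apply_alternatingProd_odd hv]
    congr 1
    push_cast [hk]
    ring

lemma right_apply_oddPosition (h : IsTwistedTriple X Y Z)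
    (hv : IsPrimitiveVector Y Z v ((2 * n + 1 : ℕ) : ℂ)) {ε : ℂ}
    (hmid : alternatingProd X Y (n + 1) v = (ε * (n + 1)) • alternatingProd X Y n v)
    (c : Fin (n + 1)) :
    Y (alternatingProd X Y (oddPosition n c) v) =
      ∑ r, AmatY (n + 1) ε r c • alternatingProd X Y (oddPosition n r) v := by
  rcases hc0 : (c : ℕ) with _ | k
  · refine eq_sum_smul_of_eq_smul c (by grind [AmatY]) ?_
    rw [show AmatY (n + 1) ε c c = 0 by grind [AmatY], zero_smul]
    exact hv.apply_eq_zero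
  refine eq_sum_smul_of_eq_smul ⟨n - k, by lia⟩ (by grind [AmatY]) ?_
  rw [AmatY, if_pos (by grind)]
  rcases lt_trichotomy (2 * (k + 1)) (n + 1) with hk | hk | hk
  · rw [if_neg (by lia), if_pos (by lia),
      show oddPosition n (k + 1) = 2 * k + 2 by grind [oddPosition],
      show oddPosition n (n - k) = 2 * k + 1 by grind [oddPosition],
      h.right_apply_alternatingProd_even hv]
    congr 1
    push_cast [hc0]
    ring
  · rw [if_pos (by lia), show oddPosition n (k + 1) = 2 * k + 1 by grind [oddPosition],
      show oddPosition n (n - k) = 2 * k + 1 by grind [oddPosition],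
      ← alternatingProd_two_mul_add_two_apply, show 2 * k + 2 = n + 1 from hk, hmid,
      show 2 * k + 1 = n by lia, Nat.cast_add_one]
  · obtain ⟨j, hj⟩ := Nat.exists_eq_add_of_le (show k + 1 ≤ n by lia)
    rw [if_neg (by lia), if_neg (by lia), one_smul,
      show oddPosition n (k + 1) = 2 * j + 1 by grind [oddPosition],
      show oddPosition n (n - k) = 2 * j + 2 by grind [oddPosition],
      alternatingProd_two_mul_add_two_apply]

lemma isIsoToModel_E [FiniteDimensional ℂ V] (h : IsTwistedTriple X Y Z)
    (hirr : IsIrreduciblePair X Y) (hv : IsPrimitiveVector Y Z v ((2 * n : ℕ) : ℂ)) :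
    IsIsoToModel X Y Z (EmatX n) (EmatY n) (EmatZ n) := by
  have hinj := EmatZ_diag_injective n
  rw [EmatZ_eq_diagonal, Matrix.diag_diagonal] at hinj
  rw [EmatZ_eq_diagonal]
  exact hirr.isIsoToModel_diagonal hinj
    (fun c ↦ h.hasEigenvector_alternatingProd hv (evenPosition_le c.isLt))
    (h.left_apply_evenPosition hv) (h.right_apply_evenPosition hv)

lemma exists_isIsoToModel_A [FiniteDimensional ℂ V] (h : IsTwistedTriple X Y Z)
    (hirr : IsIrreduciblePair X Y) (hv : IsPrimitiveVector Y Z v ((2 * n + 1 : ℕ) : ℂ)) :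
    ∃ ε : ℂ, (ε = 1 ∨ ε = -1) ∧
      IsIsoToModel X Y Z (AmatX (n + 1) ε) (AmatY (n + 1) ε) (AmatZ (n + 1)) := by
  obtain ⟨u, ε, hε, hu, hmid⟩ := h.exists_isPrimitiveVector_middle_eq_smul hv
  refine ⟨ε, hε, ?_⟩
  have hinj := AmatZ_diag_injective (n + 1)
  rw [AmatZ_succ_eq_diagonal, Matrix.diag_diagonal] at hinj
  rw [AmatZ_succ_eq_diagonal]
  exact hirr.isIsoToModel_diagonal hinj
    (fun c ↦ h.hasEigenvector_alternatingProd hu ((oddPosition_le c.isLt).trans (by lia)))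
    (h.left_apply_oddPosition hu hmid) (h.right_apply_oddPosition hu hmid)

lemma exists_isIsoToModel_B [FiniteDimensional ℂ V] (h : IsTwistedTriple X Y Z)
    (hirr : IsIrreduciblePair X Y) (hv : IsPrimitiveVector X (-Z) v ((2 * n + 1 : ℕ) : ℂ)) :
    ∃ ε : ℂ, (ε = 1 ∨ ε = -1) ∧ IsIsoToModel X Y Z (BmatX n ε) (BmatY n ε) (BmatZ n) := by
  obtain ⟨ε, hε, hA⟩ := h.swap.exists_isIsoToModel_A hirr.swap hv
  exact ⟨ε, hε, isIsoToModel_B_of_swap hA⟩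

end IsTwistedTriple

end Models

/-- classification: every non-zero finite-dimensional simple module
over `U = ℂ⟨X,Y,Z⟩/(XZ+ZX−2X, YZ+ZY+2Y, X²−Y²−Z)` is isomorphic to one of the
modules `E_n` (`n ≥ 0`), `A_n^±` (`n ≥ 1`) or `B_n^±` (`n ≥ 0`). -/
theorem UF_simple_module_classification
    {V : Type*} [AddCommGroup V] [Module ℂ V] [FiniteDimensional ℂ V] [Nontrivial V]
    (X Y Z : Module.End ℂ V)
    (hXZ : X * Z + Z * X = (2 : ℂ) • X)
    (hYZ : Y * Z + Z * Y = (-2 : ℂ) • Y)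
    (hXYZ : X * X - Y * Y = Z)
    (hsimple : ∀ W : Submodule ℂ V, (∀ w ∈ W, X w ∈ W) → (∀ w ∈ W, Y w ∈ W) →
      (∀ w ∈ W, Z w ∈ W) → W = ⊥ ∨ W = ⊤) :
    (∃ n : ℕ, IsIsoToModel X Y Z (EmatX n) (EmatY n) (EmatZ n)) ∨
    (∃ (n : ℕ) (ε : ℂ), 1 ≤ n ∧ (ε = 1 ∨ ε = -1) ∧
      IsIsoToModel X Y Z (AmatX n ε) (AmatY n ε) (AmatZ n)) ∨
    (∃ (n : ℕ) (ε : ℂ), (ε = 1 ∨ ε = -1) ∧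
      IsIsoToModel X Y Z (BmatX n ε) (BmatY n ε) (BmatZ n)) := by
  have h : IsTwistedTriple X Y Z := ⟨hXZ, hYZ, hXYZ⟩
  have hirr : IsIrreduciblePair X Y := fun W hX hY ↦ hsimple W hX hY fun w hw ↦ by
    rw [← hXYZ]
    exact sub_mem (hX (hX hw)) (hY (hY hw))
  rcases h.exists_isPrimitiveVector_even_or_odd with ⟨n, v, hv⟩ | ⟨n, v, hv⟩ | ⟨n, v, hv⟩
  · exact Or.inl ⟨n, h.isIsoToModel_E hirr hv⟩
  · obtain ⟨ε, hε, hA⟩ := h.exists_isIsoToModel_A hirr hv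
    exact Or.inr (Or.inl ⟨n + 1, ε, n.succ_pos, hε, hA⟩)
  · obtain ⟨ε, hε, hB⟩ := h.exists_isIsoToModel_B hirr hv
    exact Or.inr (Or.inr ⟨n, ε, hε, hB⟩)
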